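/- Let m1, m2, m3, m4 > 0 and M = m1+m2+m3+m4. There is at most one r ∈ ℝ⁶ with all six coordinates positive satisfying I(r) = 1, F(r) = 0, H(r) = 0, the triangle inequalities r_ij + r_jk > r_ik for all triples of distinct indices, and for which there exist real numbers λ and σ with ∇U(r) + λ M ∇I(r) + σ ∇F(r) = 0. That is, for each choice of positive masses there is at most one (normalized, sequentially ordered) trapezoidal central configuration of four bodies. -/

import Mathlib

noncomputable section

/-- `F` as a function of the vector of mutual distances
`r = (r12, r13, r14, r23, r24, r34)` (indexed `0,…,5`). -/
def F (r : Fin 6 → ℝ) : ℝ :=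
  2 * r 0 * r 5 - (r 1) ^ 2 - (r 4) ^ 2 + (r 3) ^ 2 + (r 2) ^ 2

/-- The Cayley–Menger determinant of the mutual distances. -/
def H (r : Fin 6 → ℝ) : ℝ :=
  Matrix.det
    !![0, 1, 1, 1, 1;
       1, 0, (r 0) ^ 2, (r 1) ^ 2, (r 2) ^ 2;
       1, (r 0) ^ 2, 0, (r 3) ^ 2, (r 4) ^ 2;
       1, (r 1) ^ 2, (r 3) ^ 2, 0, (r 5) ^ 2;
       1, (r 2) ^ 2, (r 4) ^ 2, (r 5) ^ 2, 0]

/-- The Newtonian potential `U(r) = Σ_{i<j} m_i m_j / r_ij`. -/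
def U (m1 m2 m3 m4 : ℝ) (r : Fin 6 → ℝ) : ℝ :=
  m1 * m2 / r 0 + m1 * m3 / r 1 + m1 * m4 / r 2 +
    m2 * m3 / r 3 + m2 * m4 / r 4 + m3 * m4 / r 5

/-- The moment of inertia `I(r) = (1/(2M)) Σ_{i<j} m_i m_j r_ij²`. -/
def Iner (m1 m2 m3 m4 : ℝ) (r : Fin 6 → ℝ) : ℝ :=
  (1 / (2 * (m1 + m2 + m3 + m4))) *
    (m1 * m2 * (r 0) ^ 2 + m1 * m3 * (r 1) ^ 2 + m1 * m4 * (r 2) ^ 2 +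
      m2 * m3 * (r 3) ^ 2 + m2 * m4 * (r 4) ^ 2 + m3 * m4 * (r 5) ^ 2)

/-- The symmetric matrix of mutual distances `d i j = r_{i+1, j+1}`. -/
def dmat (r : Fin 6 → ℝ) : Matrix (Fin 4) (Fin 4) ℝ :=
  !![0,   r 0, r 1, r 2;
     r 0, 0,   r 3, r 4;
     r 1, r 3, 0,   r 5;
     r 2, r 4, r 5, 0]

/-- A normalized sequentially ordered trapezoidal central configuration:
positive mutual distances satisfying `I = 1`, `F = 0`, `H = 0`, all triangle
inequalities, and the Lagrange condition `∇U + λM∇I + σ∇F = 0`. -/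
def IsTrapezoidalCC (m1 m2 m3 m4 : ℝ) (r : Fin 6 → ℝ) : Prop :=
  (∀ i, 0 < r i) ∧ Iner m1 m2 m3 m4 r = 1 ∧ F r = 0 ∧ H r = 0 ∧
    (∀ i j k : Fin 4, i ≠ j → j ≠ k → i ≠ k →
      dmat r i j + dmat r j k > dmat r i k) ∧
    ∃ lam sigma : ℝ,
      fderiv ℝ (U m1 m2 m3 m4) r
          + (lam * (m1 + m2 + m3 + m4)) • fderiv ℝ (Iner m1 m2 m3 m4) r
          + sigma • fderiv ℝ F r = 0

/-! In the logarithmic coordinates `x_k = log r_k` a Lagrangian `Σ c_k φ(r_k) + λ Σ c_k r_k² + σ F`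
has the form `Σ c_k φ(e^{x_k}) + Σ κ_k e^{2 x_k} + 2σ e^{x_0 + x_5}`. At a critical configuration,
if `φ` is decreasing, stationarity along the diagonals and legs forces every `κ_k > 0`. If `φ ∘ exp`
is also convex, then `F = 0` forces `σ ≥ 0`, because for `σ < 0` the legs would be longer than the
diagonals, and so the Lagrangian is strictly convex in `x`. A critical configuration is therefore
the strict minimizer of the potential among the configurations with `F ≤ 0` and no larger
moment of inertia, and two of them with the same moment of inertia must coincide. -/

open Set

/-- The Bregman divergence of `φ ∘ exp` between `log x` and `log y`, for `x, y > 0`. -/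
def logBregman (φ : ℝ → ℝ) (x y : ℝ) : ℝ :=
  φ y - φ x - x * deriv φ x * Real.log (y / x)

section LogBregman

variable {φ : ℝ → ℝ} {x y : ℝ}

lemma logBregman_nonneg (hφ : ConvexOn ℝ univ fun t ↦ φ (Real.exp t))
    (hd : DifferentiableAt ℝ φ x) (hx : 0 < x) (hy : 0 < y) : 0 ≤ logBregman φ x y := by
  have hderiv : HasDerivAt (fun t ↦ φ (Real.exp t)) (x * deriv φ x) (Real.log x) := by
    have hd' : HasDerivAt φ (deriv φ x) (Real.exp (Real.log x)) := by
      simpa only [Real.exp_log hx] using hd.hasDerivAt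
    simpa only [Real.exp_log hx, mul_comm, Function.comp_def] using
      hd'.comp _ (Real.hasDerivAt_exp _)
  rw [logBregman, Real.log_div hy.ne' hx.ne']
  rcases lt_trichotomy (Real.log x) (Real.log y) with hlt | heq | hlt
  · have h := hφ.le_slope_of_hasDerivAt (mem_univ _) (mem_univ _) hlt hderiv
    rw [slope_def_field, le_div_iff₀ (sub_pos.2 hlt), Real.exp_log hx, Real.exp_log hy] at h
    linarith
  · simp [Real.log_injOn_pos hx hy heq]
  · have h := hφ.slope_le_of_hasDerivAt (mem_univ _) (mem_univ _) hlt hderiv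
    rw [slope_def_field, div_le_iff₀ (sub_pos.2 hlt), Real.exp_log hx, Real.exp_log hy] at h
    linarith

lemma logBregman_id_pos (hx : 0 < x) (hy : 0 < y) (hxy : x ≠ y) : 0 < logBregman id x y := by
  have hlog : Real.log (y / x) < y / x - 1 :=
    Real.log_lt_sub_one_of_pos (div_pos hy hx) fun h ↦ hxy ((div_eq_one_iff_eq hx.ne').1 h).symm
  have hmul : x * Real.log (y / x) < x * (y / x - 1) := mul_lt_mul_of_pos_left hlog hx
  have hcancel : x * (y / x - 1) = y - x := by field_simp
  simp only [logBregman, deriv_id, id]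
  linarith

lemma logBregman_id_nonneg (hx : 0 < x) (hy : 0 < y) : 0 ≤ logBregman id x y :=
  logBregman_nonneg convexOn_exp differentiableAt_id hx hy

lemma logBregman_sq (x y : ℝ) : logBregman (· ^ 2) x y = logBregman id (x ^ 2) (y ^ 2) := by
  simp only [logBregman, deriv_pow_field, deriv_id, id, ← div_pow, Real.log_pow]
  push_cast
  ring

lemma logBregman_sq_pos (hx : 0 < x) (hy : 0 < y) (hxy : x ≠ y) :
    0 < logBregman (· ^ 2) x y := by
  rw [logBregman_sq]
  exact logBregman_id_pos (pow_pos hx 2) (pow_pos hy 2)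
    fun h ↦ hxy ((pow_left_inj₀ hx.le hy.le two_ne_zero).1 h)

lemma logBregman_sq_nonneg (hx : 0 < x) (hy : 0 < y) : 0 ≤ logBregman (· ^ 2) x y := by
  rw [logBregman_sq]
  exact logBregman_id_nonneg (pow_pos hx 2) (pow_pos hy 2)

lemma mul_deriv_le_mul_deriv (hφ : ConvexOn ℝ univ fun t ↦ φ (Real.exp t))
    (hdx : DifferentiableAt ℝ φ x) (hdy : DifferentiableAt ℝ φ y) (hx : 0 < x) (hxy : x ≤ y) :
    x * deriv φ x ≤ y * deriv φ y := by
  rcases hxy.eq_or_lt with rfl | hlt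
  · rfl
  have hy : 0 < y := hx.trans hlt
  have hsymm : logBregman φ x y + logBregman φ y x =
      (y * deriv φ y - x * deriv φ x) * Real.log (y / x) := by
    rw [logBregman, logBregman, ← inv_div y x, Real.log_inv]
    ring
  have hlog : 0 < Real.log (y / x) := Real.log_pos ((one_lt_div hx).2 hlt)
  refine sub_nonneg.1 (nonneg_of_mul_nonneg_left ?_ hlog)
  rw [← hsymm]
  exact add_nonneg (logBregman_nonneg hφ hdx hx hy) (logBregman_nonneg hφ hdy hy hx)

lemma deriv_div_self_le_deriv_div_self (hφ : ConvexOn ℝ univ fun t ↦ φ (Real.exp t))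
    (hφ' : ∀ x, 0 < x → deriv φ x < 0) (hx : 0 < x) (hxy : x ≤ y) :
    deriv φ x / x ≤ deriv φ y / y := by
  have hy : 0 < y := hx.trans_le hxy
  have hmul : x * deriv φ x ≤ y * deriv φ y :=
    mul_deriv_le_mul_deriv hφ (differentiableAt_of_deriv_ne_zero (hφ' x hx).ne)
      (differentiableAt_of_deriv_ne_zero (hφ' y hy).ne) hx hxy
  have hneg : -(y * deriv φ y) / y ^ 2 ≤ -(x * deriv φ x) / x ^ 2 :=
    div_le_div₀ (neg_nonneg.2 (mul_neg_of_pos_of_neg hx (hφ' x hx)).le) (neg_le_neg hmul)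
      (pow_pos hx 2) (pow_le_pow_left₀ hx.le hxy 2)
  have hrew (z : ℝ) : -(z * deriv φ z) / z ^ 2 = -(deriv φ z / z) := by
    field_simp
  rw [hrew, hrew] at hneg
  exact neg_le_neg_iff.1 hneg

end LogBregman

/-- The sum `Σ c_k φ(r_k)` over the mutual distances. With `c` the products `m_i m_j` it is the
Newtonian potential for `φ = x⁻¹`, and `2M` times the moment of inertia for `φ = x²`. -/
def pairSum {ι : Type*} [Fintype ι] (c : ι → ℝ) (φ : ℝ → ℝ) (r : ι → ℝ) : ℝ :=
  ∑ k, c k * φ (r k)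

lemma fderiv_pairSum_single {ι : Type*} [Fintype ι] [DecidableEq ι] (c : ι → ℝ) {φ : ℝ → ℝ}
    {r : ι → ℝ} (hφ : ∀ k, DifferentiableAt ℝ φ (r k)) (k : ι) :
    fderiv ℝ (pairSum c φ) r (Pi.single k 1) = c k * deriv φ (r k) := by
  have hcoord (j : ι) : HasFDerivAt (fun x : ι → ℝ ↦ x j)
      (ContinuousLinearMap.proj (R := ℝ) (φ := fun _ : ι ↦ ℝ) j) r := hasFDerivAt_apply j r
  have h : HasFDerivAt (pairSum c φ) _ r := HasFDerivAt.fun_sum fun j _ ↦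
    ((hφ j).hasDerivAt.comp_hasFDerivAt r (hcoord j)).const_mul (c j)
  simp [h.fderiv, Pi.single_apply]

/-- The vector of partial derivatives of `F`. -/
def gradF (r : Fin 6 → ℝ) : Fin 6 → ℝ :=
  ![2 * r 5, -(2 * r 1), 2 * r 2, 2 * r 3, -(2 * r 4), 2 * r 0]

lemma fderiv_F_single (r : Fin 6 → ℝ) (k : Fin 6) :
    fderiv ℝ F r (Pi.single k 1) = gradF r k := by
  have p (i : Fin 6) := hasFDerivAt_apply (𝕜 := ℝ) (F' := fun _ : Fin 6 ↦ ℝ) i r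
  have h : HasFDerivAt F _ r :=
    ((((((p 0).const_mul 2).mul (p 5)).sub ((p 1).pow 2)).sub ((p 4).pow 2)).add
      ((p 3).pow 2)).add ((p 2).pow 2)
  rw [h.fderiv]
  fin_cases k <;> simp [gradF, mul_comm]

/-- The Lagrange condition with multipliers `lam` and `sigma`, written in coordinates. -/
def IsLagrangeStationary (c : Fin 6 → ℝ) (φ : ℝ → ℝ) (lam sigma : ℝ) (r : Fin 6 → ℝ) : Prop :=
  ∀ k, c k * deriv φ (r k) + lam * (c k * (2 * r k)) + sigma * gradF r k = 0

lemma isLagrangeStationary_of_fderiv_eq_zero {c : Fin 6 → ℝ} {φ : ℝ → ℝ} {lam sigma : ℝ}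
    {r : Fin 6 → ℝ} (hφ : ∀ k, DifferentiableAt ℝ φ (r k))
    (h : fderiv ℝ (pairSum c φ) r + lam • fderiv ℝ (pairSum c (· ^ 2)) r
      + sigma • fderiv ℝ F r = 0) :
    IsLagrangeStationary c φ lam sigma r := by
  intro k
  have hk := DFunLike.congr_fun h (Pi.single k 1)
  have hsq : ∀ k, DifferentiableAt ℝ (fun x : ℝ ↦ x ^ 2) (r k) := fun k ↦ by fun_prop
  simpa [fderiv_pairSum_single c hφ, fderiv_pairSum_single c hsq, fderiv_F_single] using hk

/-- The coefficients of the squares `r_k²` in the Lagrangian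
`Σ c_k φ(r_k) + lam Σ c_k r_k² + sigma F`. -/
def sqCoeff (c : Fin 6 → ℝ) (lam sigma : ℝ) : Fin 6 → ℝ :=
  ![lam * c 0, lam * c 1 - sigma, lam * c 2 + sigma, lam * c 3 + sigma, lam * c 4 - sigma,
    lam * c 5]

namespace IsLagrangeStationary

variable {c : Fin 6 → ℝ} {φ : ℝ → ℝ} {lam sigma : ℝ} {r : Fin 6 → ℝ}

lemma mul_deriv_div_self_eq (h : IsLagrangeStationary c φ lam sigma r) (hr : ∀ k, 0 < r k)
    {k : Fin 6} (h0 : k ≠ 0) (h5 : k ≠ 5) :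
    c k * (deriv φ (r k) / r k) = -2 * sqCoeff c lam sigma k := by
  have hk := h k
  have hrk := (hr k).ne'
  field_simp
  fin_cases k <;> try contradiction
  all_goals
    simp only [gradF, sqCoeff, Fin.reduceFinMk, Matrix.cons_val] at hk ⊢
    linear_combination hk

lemma sqCoeff_pos (h : IsLagrangeStationary c φ lam sigma r) (hφ' : ∀ x, 0 < x → deriv φ x < 0)
    (hc : ∀ k, 0 < c k) (hr : ∀ k, 0 < r k) (k : Fin 6) : 0 < sqCoeff c lam sigma k := by
  have hside {k : Fin 6} (h0 : k ≠ 0) (h5 : k ≠ 5) : 0 < sqCoeff c lam sigma k := by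
    have hneg := mul_neg_of_pos_of_neg (hc k) (div_neg_of_neg_of_pos (hφ' _ (hr k)) (hr k))
    linarith [h.mul_deriv_div_self_eq hr h0 h5]
  have hlam : 0 < lam := by
    have h1 : 0 < lam * c 1 - sigma := hside (k := 1) (by decide) (by decide)
    have h2 : 0 < lam * c 2 + sigma := hside (k := 2) (by decide) (by decide)
    exact pos_of_mul_pos_left (b := c 1 + c 2) (by linarith) (add_pos (hc 1) (hc 2)).le
  by_cases h0 : k = 0
  · exact h0 ▸ mul_pos hlam (hc 0)
  by_cases h5 : k = 5
  · exact h5 ▸ mul_pos hlam (hc 5)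
  exact hside h0 h5

lemma sigma_nonneg (h : IsLagrangeStationary c φ lam sigma r)
    (hφ : ConvexOn ℝ univ fun t ↦ φ (Real.exp t)) (hφ' : ∀ x, 0 < x → deriv φ x < 0)
    (hc : ∀ k, 0 < c k) (hr : ∀ k, 0 < r k) (hF : F r = 0) : 0 ≤ sigma := by
  by_contra! hs
  have hdiagonal {k : Fin 6} (h0 : k ≠ 0) (h5 : k ≠ 5)
      (hk : sqCoeff c lam sigma k = lam * c k - sigma) : deriv φ (r k) / r k < -2 * lam := by
    refine lt_of_mul_lt_mul_left (a := c k) ?_ (hc k).le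
    rw [h.mul_deriv_div_self_eq hr h0 h5, hk]
    linarith
  have hleg {k : Fin 6} (h0 : k ≠ 0) (h5 : k ≠ 5)
      (hk : sqCoeff c lam sigma k = lam * c k + sigma) : -2 * lam < deriv φ (r k) / r k := by
    refine lt_of_mul_lt_mul_left (a := c k) ?_ (hc k).le
    rw [h.mul_deriv_div_self_eq hr h0 h5, hk]
    linarith
  have hlt {i j : Fin 6} (hij : deriv φ (r i) / r i < deriv φ (r j) / r j) : r i < r j :=
    lt_of_not_ge fun hle ↦ hij.not_ge (deriv_div_self_le_deriv_div_self hφ hφ' (hr j) hle)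
  have h12 : r 1 < r 2 := hlt <|
    (hdiagonal (by decide) (by decide) rfl).trans (hleg (by decide) (by decide) rfl)
  have h43 : r 4 < r 3 := hlt <|
    (hdiagonal (by decide) (by decide) rfl).trans (hleg (by decide) (by decide) rfl)
  have hsq12 : r 1 ^ 2 < r 2 ^ 2 := pow_lt_pow_left₀ h12 (hr 1).le two_ne_zero
  have hsq43 : r 4 ^ 2 < r 3 ^ 2 := pow_lt_pow_left₀ h43 (hr 4).le two_ne_zero
  have hbases : 0 < r 0 * r 5 := mul_pos (hr 0) (hr 5)
  rw [F] at hF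
  linarith

lemma lagrangian_sub_eq (h : IsLagrangeStationary c φ lam sigma r) {r' : Fin 6 → ℝ}
    (hr : ∀ k, 0 < r k) (hr' : ∀ k, 0 < r' k) :
    (pairSum c φ r' + lam * pairSum c (· ^ 2) r' + sigma * F r')
      - (pairSum c φ r + lam * pairSum c (· ^ 2) r + sigma * F r) =
    ∑ k, (c k * logBregman φ (r k) (r' k)
        + sqCoeff c lam sigma k * logBregman (· ^ 2) (r k) (r' k))
      + 2 * sigma * logBregman id (r 0 * r 5) (r' 0 * r' 5) := by
  have hbases : Real.log (r' 0 * r' 5 / (r 0 * r 5))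
      = Real.log (r' 0 / r 0) + Real.log (r' 5 / r 5) := by
    rw [mul_div_mul_comm, Real.log_mul (div_pos (hr' 0) (hr 0)).ne' (div_pos (hr' 5) (hr 5)).ne']
  have hstat : ∑ k, r k * Real.log (r' k / r k) *
      (c k * deriv φ (r k) + lam * (c k * (2 * r k)) + sigma * gradF r k) = 0 :=
    Finset.sum_eq_zero fun k _ ↦ by rw [h k, mul_zero]
  simp only [Fin.sum_univ_six, gradF, Matrix.cons_val] at hstat
  simp only [pairSum, F, logBregman, sqCoeff, hbases, Fin.sum_univ_six, Matrix.cons_val,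
    deriv_pow_field, deriv_id, id]
  push_cast
  linear_combination hstat

lemma lagrangian_lt (h : IsLagrangeStationary c φ lam sigma r)
    (hφ : ConvexOn ℝ univ fun t ↦ φ (Real.exp t)) (hφ' : ∀ x, 0 < x → deriv φ x < 0)
    (hc : ∀ k, 0 < c k) (hs : 0 ≤ sigma) {r' : Fin 6 → ℝ} (hr : ∀ k, 0 < r k)
    (hr' : ∀ k, 0 < r' k) (hne : r ≠ r') :
    pairSum c φ r + lam * pairSum c (· ^ 2) r + sigma * F r <
      pairSum c φ r' + lam * pairSum c (· ^ 2) r' + sigma * F r' := by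
  rw [← sub_pos, h.lagrangian_sub_eq hr hr']
  have hpot (k : Fin 6) : 0 ≤ c k * logBregman φ (r k) (r' k) :=
    mul_nonneg (hc k).le (logBregman_nonneg hφ
      (differentiableAt_of_deriv_ne_zero (hφ' _ (hr k)).ne) (hr k) (hr' k))
  have hsq (k : Fin 6) := h.sqCoeff_pos hφ' hc hr k
  obtain ⟨j, hj⟩ := Function.ne_iff.1 hne
  refine add_pos_of_pos_of_nonneg (Finset.sum_pos' (fun k _ ↦ ?_) ⟨j, Finset.mem_univ j, ?_⟩) ?_
  · exact add_nonneg (hpot k) (mul_nonneg (hsq k).le (logBregman_sq_nonneg (hr k) (hr' k)))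
  · exact add_pos_of_nonneg_of_pos (hpot j)
      (mul_pos (hsq j) (logBregman_sq_pos (hr j) (hr' j) hj))
  · exact mul_nonneg (mul_nonneg zero_le_two hs)
      (logBregman_id_nonneg (mul_pos (hr 0) (hr 5)) (mul_pos (hr' 0) (hr' 5)))

end IsLagrangeStationary

/-- A critical configuration of the potential `Σ c_k φ(r_k)` on a level set of `Σ c_k r_k²` in
`F = 0`. With `c` the products `m_i m_j` and `φ = x⁻¹`, trapezoidal central configurations are of
this kind. -/
structure IsTrapezoidalCritical (c : Fin 6 → ℝ) (φ : ℝ → ℝ) (r : Fin 6 → ℝ) : Prop where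
  pos : ∀ k, 0 < r k
  F_eq_zero : F r = 0
  exists_multipliers : ∃ lam sigma : ℝ,
    fderiv ℝ (pairSum c φ) r + lam • fderiv ℝ (pairSum c (· ^ 2)) r
      + sigma • fderiv ℝ F r = 0

lemma IsTrapezoidalCritical.pairSum_lt {c : Fin 6 → ℝ} {φ : ℝ → ℝ} {r r' : Fin 6 → ℝ}
    (h : IsTrapezoidalCritical c φ r) (hφ : ConvexOn ℝ univ fun t ↦ φ (Real.exp t))
    (hφ' : ∀ x, 0 < x → deriv φ x < 0) (hc : ∀ k, 0 < c k) (hr' : ∀ k, 0 < r' k)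
    (hF' : F r' ≤ 0) (hI : pairSum c (· ^ 2) r' ≤ pairSum c (· ^ 2) r) (hne : r ≠ r') :
    pairSum c φ r < pairSum c φ r' := by
  obtain ⟨lam, sigma, hcrit⟩ := h.exists_multipliers
  have hst := isLagrangeStationary_of_fderiv_eq_zero
    (fun k ↦ differentiableAt_of_deriv_ne_zero (hφ' _ (h.pos k)).ne) hcrit
  have hs := hst.sigma_nonneg hφ hφ' hc h.pos h.F_eq_zero
  have hlam : 0 < lam := pos_of_mul_pos_left (hst.sqCoeff_pos hφ' hc h.pos 0) (hc 0).le
  have hlt := hst.lagrangian_lt hφ hφ' hc hs h.pos hr' hne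
  rw [h.F_eq_zero, mul_zero] at hlt
  linarith [mul_le_mul_of_nonneg_left hI hlam.le, mul_nonpos_of_nonneg_of_nonpos hs hF']

theorem trapezoidal_cc_unique_general {c : Fin 6 → ℝ} {φ : ℝ → ℝ} {r r' : Fin 6 → ℝ}
    (hφ : ConvexOn ℝ univ fun t ↦ φ (Real.exp t)) (hφ' : ∀ x, 0 < x → deriv φ x < 0)
    (hc : ∀ k, 0 < c k) (h : IsTrapezoidalCritical c φ r) (h' : IsTrapezoidalCritical c φ r')
    (hI : pairSum c (· ^ 2) r = pairSum c (· ^ 2) r') : r = r' := by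
  by_contra hne
  exact lt_asymm (h.pairSum_lt hφ hφ' hc h'.pos h'.F_eq_zero.le hI.ge hne)
    (h'.pairSum_lt hφ hφ' hc h.pos h.F_eq_zero.le hI.le (Ne.symm hne))

lemma convexOn_inv_exp : ConvexOn ℝ univ fun t ↦ (Real.exp t)⁻¹ := by
  simpa [Function.comp_def, Real.exp_neg] using convexOn_exp.comp_linearMap (-LinearMap.id)

lemma deriv_inv_neg {x : ℝ} (hx : 0 < x) : deriv (fun y : ℝ ↦ y⁻¹) x < 0 := by
  rw [deriv_inv]
  exact neg_lt_zero.2 (inv_pos.2 (pow_pos hx 2))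

/-- The products `m_i m_j` in the order `(12, 13, 14, 23, 24, 34)` of the mutual distances. -/
def massProducts (m1 m2 m3 m4 : ℝ) : Fin 6 → ℝ :=
  ![m1 * m2, m1 * m3, m1 * m4, m2 * m3, m2 * m4, m3 * m4]

section Masses

variable {m1 m2 m3 m4 : ℝ}

lemma massProducts_pos (hm1 : 0 < m1) (hm2 : 0 < m2) (hm3 : 0 < m3) (hm4 : 0 < m4) (k : Fin 6) :
    0 < massProducts m1 m2 m3 m4 k := by
  fin_cases k <;> simp [massProducts, *]

lemma U_eq_pairSum : U m1 m2 m3 m4 = pairSum (massProducts m1 m2 m3 m4) (·⁻¹) := by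
  funext r
  simp [U, pairSum, massProducts, Fin.sum_univ_six, div_eq_mul_inv]

lemma Iner_eq_smul_pairSum : Iner m1 m2 m3 m4 =
    (1 / (2 * (m1 + m2 + m3 + m4))) • pairSum (massProducts m1 m2 m3 m4) (· ^ 2) := by
  funext r
  simp [Iner, pairSum, massProducts, Fin.sum_univ_six]

lemma IsTrapezoidalCC.isTrapezoidalCritical {r : Fin 6 → ℝ}
    (h : IsTrapezoidalCC m1 m2 m3 m4 r) :
    IsTrapezoidalCritical (massProducts m1 m2 m3 m4) (·⁻¹) r := by
  obtain ⟨hr, -, hF, -, -, lam, sigma, hcrit⟩ := h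
  rw [U_eq_pairSum, Iner_eq_smul_pairSum, fderiv_const_smul_field, Pi.smul_apply, smul_smul]
    at hcrit
  exact ⟨hr, hF, _, sigma, hcrit⟩

lemma IsTrapezoidalCC.pairSum_sq_eq {r : Fin 6 → ℝ} (h : IsTrapezoidalCC m1 m2 m3 m4 r) :
    pairSum (massProducts m1 m2 m3 m4) (· ^ 2) r = 2 * (m1 + m2 + m3 + m4) := by
  have hI : 1 / (2 * (m1 + m2 + m3 + m4)) * pairSum (massProducts m1 m2 m3 m4) (· ^ 2) r = 1 := by
    simpa [Iner_eq_smul_pairSum] using h.2.1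
  rw [one_div, ← div_eq_inv_mul] at hI
  exact eq_of_div_eq_one hI

end Masses

/-- For each choice of positive masses there is at most one normalized,
sequentially ordered trapezoidal central configuration of four bodies. -/
theorem trapezoidal_cc_unique (m1 m2 m3 m4 : ℝ) (hm1 : 0 < m1) (hm2 : 0 < m2)
    (hm3 : 0 < m3) (hm4 : 0 < m4) (r r' : Fin 6 → ℝ)
    (h : IsTrapezoidalCC m1 m2 m3 m4 r) (h' : IsTrapezoidalCC m1 m2 m3 m4 r') :
    r = r' :=
  trapezoidal_cc_unique_general convexOn_inv_exp (fun _ ↦ deriv_inv_neg)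
    (massProducts_pos hm1 hm2 hm3 hm4) h.isTrapezoidalCritical h'.isTrapezoidalCritical
    (h.pairSum_sq_eq.trans h'.pairSum_sq_eq.symm)
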